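/- Let G be a non-compact, compactly generated t.d.l.c. group whose modular function Δ has image generated by the single rational number p/q, where p and q are coprime positive integers. Then every Cayley–Abels graph for G has degree at least p + q. -/

import Mathlib

open MeasureTheory
open scoped NNReal ENNReal

/-- A Cayley–Abels graph for a topological group `G`. -/
def IsCayleyAbels {G V : Type*} [Group G] [TopologicalSpace G]
    (Γ : SimpleGraph V) (ρ : G →* Equiv.Perm V) : Prop :=
  Γ.Connected ∧ (∀ v : V, (Γ.neighborSet v).Finite) ∧
    (∀ (g : G) (u v : V), Γ.Adj u v → Γ.Adj (ρ g u) (ρ g v)) ∧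
    (∀ u v : V, ∃ g : G, ρ g u = v) ∧
    (∀ v : V, IsCompact {g : G | ρ g v = v} ∧ IsOpen {g : G | ρ g v = v})

/-!
Let `G_v` be the stabilizer of a vertex `v`. Comparing the Haar measures of `G_v` and
`G_{gv} = g G_v g⁻¹` with that of their intersection gives
`Δ(g) · |G_v (gv)| = Δ(g) · [G_v : G_v ∩ G_{gv}] = [G_{gv} : G_v ∩ G_{gv}] = |G_v (g⁻¹v)|`.

As the graph is connected, `G` is generated by `G_v`, on which `Δ` is trivial, and the elements
moving `v` to a neighbour. So if `Δ` is nontrivial, some `g` with `gv` adjacent to `v` has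
`Δ(g) ≠ 1`. The orbits `G_v (gv)` and `G_v (g⁻¹v)` are then disjoint sets of neighbours of `v`
whose sizes have ratio `Δ(g) = (p/q)ᵏ` with `k ≠ 0`; as `p` and `q` are coprime, one size is
divisible by `p` and the other by `q`.

If `Δ` is trivial then `p = q = 1`, and the bound says that an infinite connected
vertex-transitive graph has degree at least two.
-/

section Arithmetic

variable {p q a b : ℕ}

theorem add_le_add_of_coprime_of_pow_mul_eq (hpq : p.Coprime q) {n : ℕ} (hn : n ≠ 0)
    (ha : a ≠ 0) (hb : b ≠ 0) (h : p ^ n * a = q ^ n * b) : p + q ≤ b + a := by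
  have hpb : p ^ n ∣ b := (hpq.pow n n).dvd_of_dvd_mul_left (Dvd.intro _ h)
  have hqa : q ^ n ∣ a := (hpq.symm.pow n n).dvd_of_dvd_mul_left (Dvd.intro _ h.symm)
  exact add_le_add
    (Nat.le_of_dvd hb.bot_lt ((dvd_pow_self p hn).trans hpb))
    (Nat.le_of_dvd ha.bot_lt ((dvd_pow_self q hn).trans hqa))

theorem add_le_add_of_coprime_of_div_zpow_mul_eq (hpq : p.Coprime q) {k : ℤ} (hk : k ≠ 0)
    (hb : b ≠ 0) (h : ((p : ℝ≥0) / q) ^ k * a = b) : p + q ≤ a + b := by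
  have ha : a ≠ 0 := by
    rintro rfl
    exact hb (by simpa using h.symm)
  have hdiv : (p : ℝ≥0) / q ≠ 0 := by
    intro h0
    rw [h0, zero_zpow k hk, zero_mul] at h
    exact hb (mod_cast h.symm)
  have hp : (p : ℝ≥0) ≠ 0 := (div_ne_zero_iff.1 hdiv).1
  have hq : (q : ℝ≥0) ≠ 0 := (div_ne_zero_iff.1 hdiv).2
  obtain ⟨n, rfl | rfl⟩ := k.eq_nat_or_neg
  · rw [zpow_natCast, div_pow] at h
    field_simp at h
    rw [add_comm a b]
    exact add_le_add_of_coprime_of_pow_mul_eq hpq (by simpa using hk) ha hb (mod_cast h)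
  · rw [zpow_neg, zpow_natCast, div_pow, inv_div] at h
    field_simp at h
    rw [add_comm p q, add_comm a b]
    exact add_le_add_of_coprime_of_pow_mul_eq hpq.symm (by simpa using hk) ha hb (mod_cast h)

theorem eq_one_and_eq_one_of_coprime_of_div_eq_one (hpq : p.Coprime q)
    (h : (p : ℝ≥0) / q = 1) : p = 1 ∧ q = 1 := by
  obtain rfl : p = q := by exact_mod_cast eq_of_div_eq_one h
  exact and_self_iff.2 ((Nat.coprime_self p).1 hpq)

end Arithmetic

section Compactness

variable {G : Type*} [Group G] [TopologicalSpace G]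

theorem compactSpace_of_isCompact_of_finiteIndex [ContinuousMul G] {H : Subgroup G}
    [H.FiniteIndex] (hH : IsCompact (H : Set G)) : CompactSpace G := by
  obtain ⟨s, hs, -⟩ := H.exists_isComplement_left 1
  have hs_finite : s.Finite := hs.finite_left_iff.2 inferInstance
  rw [← isCompact_univ_iff, ← hs.mul_eq]
  exact hs_finite.isCompact.mul hH

theorem isFiniteRelIndex_of_isOpen_of_isCompact [IsTopologicalGroup G] {H K : Subgroup G}
    (hK : IsOpen (K : Set G)) (hH : IsCompact (H : Set G)) : K.IsFiniteRelIndex H := by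
  have : CompactSpace H := isCompact_iff_compactSpace.1 hH
  have : Finite (H ⧸ K.subgroupOf H) :=
    Subgroup.quotient_finite_of_isOpen _ (hK.preimage continuous_subtype_val)
  rw [Subgroup.isFiniteRelIndex_iff_finiteIndex]
  exact Subgroup.finiteIndex_of_finite_quotient

end Compactness

section MeasureOfSubgroups

variable {G : Type*} [Group G] [MeasurableSpace G] [MeasurableMul G] {μ : Measure G}

instance measurableMul_subgroup (H : Subgroup G) : MeasurableMul H where
  measurable_const_mul h := (measurable_subtype_coe.const_mul (h : G)).subtype_mk
  measurable_mul_const h := (measurable_subtype_coe.mul_const (h : G)).subtype_mk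

theorem isMulLeftInvariant_comap_subtype [μ.IsMulLeftInvariant] {H : Subgroup G}
    (hH : MeasurableSet (H : Set G)) : (μ.comap H.subtype).IsMulLeftInvariant := by
  have hemb : MeasurableEmbedding H.subtype := MeasurableEmbedding.subtype_coe hH
  refine ⟨fun h ↦ Measure.ext fun A hA ↦ ?_⟩
  rw [Measure.map_apply (measurable_const_mul h) hA, hemb.comap_apply, hemb.comap_apply,
    ← measure_preimage_mul μ (h : G) (H.subtype '' A)]
  congr 1
  ext x
  constructor
  · rintro ⟨y, hy, rfl⟩
    exact ⟨h * y, hy, rfl⟩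
  · rintro ⟨y, hy, hyx : (y : G) = h * x⟩
    exact ⟨h⁻¹ * y, by simpa using hy, by simp [hyx]⟩

theorem relIndex_mul_measure_inf_of_isMulLeftInvariant [μ.IsMulLeftInvariant]
    {H K : Subgroup G} [K.IsFiniteRelIndex H] (hH : MeasurableSet (H : Set G))
    (hK : MeasurableSet (K : Set G)) : K.relIndex H * μ (K ⊓ H : Subgroup G) = μ H := by
  have hemb : MeasurableEmbedding H.subtype := MeasurableEmbedding.subtype_coe hH
  have : (μ.comap H.subtype).IsMulLeftInvariant := isMulLeftInvariant_comap_subtype hH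
  have hindex := (K.subgroupOf H).index_mul_measure (hemb.measurable hK) (μ.comap H.subtype)
  rwa [hemb.comap_apply, hemb.comap_apply, ← Subgroup.coe_map, Subgroup.subgroupOf_map_subtype,
    Set.image_univ, Subgroup.coe_subtype, Subtype.range_coe] at hindex

theorem relIndex_mul_measure_inf_of_isMulRightInvariant [MeasurableInv G]
    [μ.IsMulRightInvariant] {H K : Subgroup G} [K.IsFiniteRelIndex H]
    (hH : MeasurableSet (H : Set G)) (hK : MeasurableSet (K : Set G)) :
    K.relIndex H * μ (K ⊓ H : Subgroup G) = μ H := by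
  simpa only [Measure.inv_apply, inv_coe_set] using
    relIndex_mul_measure_inf_of_isMulLeftInvariant (μ := μ.inv) hH hK

end MeasureOfSubgroups

/-- `Δ` is the modular function attached to the right-invariant measure `μ`: left translation by
`g` scales `μ` by `Δ g`. Values are units of `ℝ≥0`, so that `Δ` is a homomorphism of groups. -/
def IsModularFunction {G : Type*} [Group G] [MeasurableSpace G] (μ : Measure G)
    (Δ : G →* ℝ≥0ˣ) : Prop :=
  ∀ (g : G) (A : Set G), MeasurableSet A →
    μ ((fun x => g * x) '' A) = ((Δ g : ℝ≥0) : ℝ≥0∞) * μ A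

namespace IsModularFunction

variable {G : Type*} [Group G] [MeasurableSpace G] {μ : Measure G} {Δ : G →* ℝ≥0ˣ}

theorem le_ker (hΔ : IsModularFunction μ Δ) {H : Subgroup G} (hH : MeasurableSet (H : Set G))
    (h_ne_zero : μ H ≠ 0) (h_ne_top : μ H ≠ ∞) : H ≤ Δ.ker := by
  intro g hg
  have hgH : (fun x ↦ g * x) '' (H : Set G) = H := smul_coe_set hg
  have hscale : 1 * μ H = ((Δ g : ℝ≥0) : ℝ≥0∞) * μ H := by
    rw [← hΔ g H hH, hgH, one_mul]
  have hone : ((Δ g : ℝ≥0) : ℝ≥0∞) = 1 := ((ENNReal.mul_left_inj h_ne_zero h_ne_top).1 hscale).symm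
  exact Units.ext (ENNReal.coe_eq_one.1 hone)

variable [MeasurableMul G] [μ.IsMulRightInvariant]

theorem measure_map_conj (hΔ : IsModularFunction μ Δ) {H : Subgroup G}
    (hH : MeasurableSet (H : Set G)) (g : G) :
    μ (H.map (MulAut.conj g).toMonoidHom) = ((Δ g : ℝ≥0) : ℝ≥0∞) * μ H := by
  rw [← hΔ g H hH, ← measure_preimage_mul_right μ g ((fun x ↦ g * x) '' H)]
  congr 1
  ext x
  rw [SetLike.mem_coe, Subgroup.mem_map_equiv, MulAut.conj_symm_apply]
  simp [mul_assoc]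

theorem mul_relIndex_map_conj [MeasurableInv G] (hΔ : IsModularFunction μ Δ)
    {H K : Subgroup G} {g : G} (hHK : K = H.map (MulAut.conj g).toMonoidHom)
    [K.IsFiniteRelIndex H] [H.IsFiniteRelIndex K] (hH : MeasurableSet (H : Set G))
    (hK : MeasurableSet (K : Set G)) (h_ne_zero : μ (H ⊓ K : Subgroup G) ≠ 0)
    (h_ne_top : μ H ≠ ∞) : (Δ g : ℝ≥0) * K.relIndex H = H.relIndex K := by
  have hinf_ne_top : μ (H ⊓ K : Subgroup G) ≠ ∞ := measure_ne_top_of_subset inf_le_left h_ne_top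
  have hmeasure : ((Δ g : ℝ≥0) : ℝ≥0∞) * K.relIndex H * μ (H ⊓ K : Subgroup G) =
      H.relIndex K * μ (H ⊓ K : Subgroup G) := by
    calc ((Δ g : ℝ≥0) : ℝ≥0∞) * K.relIndex H * μ (H ⊓ K : Subgroup G)
      _ = (Δ g : ℝ≥0) * μ H := by
        rw [mul_assoc, inf_comm, relIndex_mul_measure_inf_of_isMulRightInvariant hH hK]
      _ = μ K := by rw [hHK, hΔ.measure_map_conj hH g]
      _ = H.relIndex K * μ (H ⊓ K : Subgroup G) :=
        (relIndex_mul_measure_inf_of_isMulRightInvariant hK hH).symm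
  exact_mod_cast (ENNReal.mul_left_inj h_ne_zero hinf_ne_top).1 hmeasure

end IsModularFunction

section Stabilizers

open MulAction

variable {G V : Type*} [Group G] [MulAction G V]

theorem ncard_orbit_subgroup (H : Subgroup G) (v : V) :
    (orbit H v).ncard = (stabilizer G v).relIndex H :=
  (index_stabilizer H v).symm

theorem relIndex_stabilizer_smul_smul (g : G) (u v : V) :
    (stabilizer G (g • u)).relIndex (stabilizer G (g • v)) =
      (stabilizer G u).relIndex (stabilizer G v) := by
  rw [stabilizer_smul_eq_stabilizer_map_conj, stabilizer_smul_eq_stabilizer_map_conj,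
    Subgroup.relIndex_map_map_of_injective _ _ (MulAut.conj g).injective]

theorem map_eq_of_smul_mem_orbit_stabilizer {M : Type*} [Group M] {φ : G →* M} {v : V}
    (hφ : stabilizer G v ≤ φ.ker) {g h : G} (hgh : g • v ∈ orbit (stabilizer G v) (h • v)) :
    φ g = φ h := by
  obtain ⟨⟨s, hs⟩, hsh : s • h • v = g • v⟩ := hgh
  have hmem : g⁻¹ * (s * h) ∈ stabilizer G v := by
    rw [mem_stabilizer_iff, mul_smul, mul_smul, hsh, inv_smul_smul]
  have hker : φ (g⁻¹ * (s * h)) = 1 := hφ hmem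
  rwa [map_mul, map_mul, MonoidHom.mem_ker.1 (hφ hs), one_mul, map_inv, inv_mul_eq_one] at hker

theorem disjoint_orbit_stabilizer_smul_inv_smul {M : Type*} [Group M] [IsMulTorsionFree M]
    {φ : G →* M} {v : V} (hφ : stabilizer G v ≤ φ.ker) {g : G} (hg : φ g ≠ 1) :
    Disjoint (orbit (stabilizer G v) (g • v)) (orbit (stabilizer G v) (g⁻¹ • v)) := by
  refine (orbit.eq_or_disjoint (G := stabilizer G v) (g • v) (g⁻¹ • v)).resolve_left fun h ↦ hg ?_
  have hmem : g • v ∈ orbit (stabilizer G v) (g⁻¹ • v) := h ▸ mem_orbit_self _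
  exact self_eq_inv.1 ((map_eq_of_smul_mem_orbit_stabilizer hφ hmem).trans (map_inv φ g))

end Stabilizers

theorem exists_nontrivial_neighborSet {V : Type*} [Infinite V] {Γ : SimpleGraph V}
    (hconn : Γ.Connected) : ∃ v, (Γ.neighborSet v).Nontrivial := by
  by_contra! hsub
  obtain ⟨v⟩ := hconn.nonempty
  obtain ⟨w, hw⟩ := ((hsub v).finite.insert v).exists_notMem
  obtain ⟨walk⟩ := hconn.preconnected v w
  obtain ⟨⟨⟨a, b⟩, hab⟩, -, ha, hb⟩ := walk.exists_boundary_dart _ (Set.mem_insert v _) hw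
  rcases ha with rfl | hva
  · exact hb (Set.mem_insert_of_mem _ hab)
  · obtain rfl : b = v := hsub a hab hva.symm
    exact hb (Set.mem_insert b _)

section GraphActions

open MulAction

variable {G V : Type*} [Group G] [MulAction G V] {Γ : SimpleGraph V}

theorem ncard_neighborSet_le_ncard_neighborSet_smul
    (hadj : ∀ (g : G) (u v : V), Γ.Adj u v → Γ.Adj (g • u) (g • v)) (g : G) {v : V}
    (hfin : (Γ.neighborSet (g • v)).Finite) :
    (Γ.neighborSet v).ncard ≤ (Γ.neighborSet (g • v)).ncard :=
  Set.ncard_le_ncard_of_injOn (g • ·) (fun w hw ↦ hadj g v w hw)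
    (MulAction.injective g).injOn hfin

theorem two_le_ncard_neighborSet [Infinite V] [IsPretransitive G V] (hconn : Γ.Connected)
    (hadj : ∀ (g : G) (u v : V), Γ.Adj u v → Γ.Adj (g • u) (g • v))
    (hfin : ∀ v, (Γ.neighborSet v).Finite) (v : V) : 2 ≤ (Γ.neighborSet v).ncard := by
  obtain ⟨u, hu⟩ := exists_nontrivial_neighborSet hconn
  have : Finite (Γ.neighborSet u) := hfin u
  obtain ⟨g, rfl⟩ := exists_smul_eq G u v
  exact (Set.one_lt_ncard_iff_nontrivial.2 hu).trans_le
    (ncard_neighborSet_le_ncard_neighborSet_smul hadj g (hfin _))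

theorem eq_top_of_forall_adj_smul_mem [IsPretransitive G V] (hconn : Γ.Preconnected)
    (hadj : ∀ (g : G) (u v : V), Γ.Adj u v → Γ.Adj (g • u) (g • v)) {v : V} {S : Subgroup G}
    (hstab : stabilizer G v ≤ S) (hS : ∀ g : G, Γ.Adj v (g • v) → g ∈ S) : S = ⊤ := by
  have hmem_of_smul_mem {g : G} : g • v ∈ orbit S v → g ∈ S := by
    rintro ⟨⟨s, hs⟩, hsg : s • v = g • v⟩
    have : s⁻¹ * g ∈ S :=
      hstab (by rw [mem_stabilizer_iff, mul_smul, ← hsg, inv_smul_smul])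
    exact (S.mul_mem_cancel_left (S.inv_mem hs)).1 this
  refine eq_top_iff.2 fun g _ ↦ by_contra fun hg ↦ ?_
  obtain ⟨walk⟩ := hconn v (g • v)
  obtain ⟨⟨⟨a, b⟩, hab⟩, -, ⟨⟨s, hs⟩, hsa : s • v = a⟩, hb⟩ :=
    walk.exists_boundary_dart (orbit S v) (mem_orbit_self v) (mt hmem_of_smul_mem hg)
  obtain ⟨h, rfl⟩ := exists_smul_eq G v b
  subst hsa
  have hadj_h : Γ.Adj v ((s⁻¹ * h) • v) := by
    simpa only [inv_smul_smul, mul_smul] using hadj s⁻¹ _ _ hab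
  have hhS : h ∈ S := (S.mul_mem_cancel_left (S.inv_mem hs)).1 (hS _ hadj_h)
  exact hb ⟨⟨h, hhS⟩, rfl⟩

theorem exists_adj_smul_map_ne_one [IsPretransitive G V] (hconn : Γ.Preconnected)
    (hadj : ∀ (g : G) (u v : V), Γ.Adj u v → Γ.Adj (g • u) (g • v)) {M : Type*} [Group M]
    {φ : G →* M} (hφ : φ ≠ 1) {v : V} (hstab : stabilizer G v ≤ φ.ker) :
    ∃ g : G, Γ.Adj v (g • v) ∧ φ g ≠ 1 := by
  by_contra! hone
  exact hφ (MonoidHom.ker_eq_top_iff.1 (eq_top_of_forall_adj_smul_mem hconn hadj hstab hone))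

theorem orbit_stabilizer_subset_neighborSet
    (hadj : ∀ (g : G) (u v : V), Γ.Adj u v → Γ.Adj (g • u) (g • v)) {v w : V}
    (hvw : Γ.Adj v w) : orbit (stabilizer G v) w ⊆ Γ.neighborSet v := by
  rintro _ ⟨⟨s, hs⟩, rfl⟩
  have hsw : Γ.Adj (s • v) (s • w) := hadj s v w hvw
  rwa [mem_stabilizer_iff.1 hs] at hsw

theorem relIndex_stabilizer_add_relIndex_stabilizer_le
    (hadj : ∀ (g : G) (u v : V), Γ.Adj u v → Γ.Adj (g • u) (g • v)) {v : V}
    (hfin : (Γ.neighborSet v).Finite) {M : Type*} [Group M] [IsMulTorsionFree M] {φ : G →* M}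
    (hstab : stabilizer G v ≤ φ.ker) {g : G} (hvg : Γ.Adj v (g • v)) (hg : φ g ≠ 1) :
    (stabilizer G (g • v)).relIndex (stabilizer G v) +
      (stabilizer G v).relIndex (stabilizer G (g • v)) ≤ (Γ.neighborSet v).ncard := by
  have hvg' : Γ.Adj v (g⁻¹ • v) := by
    simpa only [inv_smul_smul] using (hadj g⁻¹ _ _ hvg).symm
  have hsub := orbit_stabilizer_subset_neighborSet hadj hvg
  have hsub' := orbit_stabilizer_subset_neighborSet hadj hvg'
  have hconj : (stabilizer G v).relIndex (stabilizer G (g • v)) =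
      (stabilizer G (g⁻¹ • v)).relIndex (stabilizer G v) := by
    simpa only [inv_smul_smul] using (relIndex_stabilizer_smul_smul g⁻¹ v (g • v)).symm
  rw [hconj, ← ncard_orbit_subgroup, ← ncard_orbit_subgroup,
    ← Set.ncard_union_eq (disjoint_orbit_stabilizer_smul_inv_smul hstab hg)
      (hfin.subset hsub) (hfin.subset hsub')]
  exact Set.ncard_le_ncard (Set.union_subset hsub hsub') hfin

end GraphActions

section CompactOpenStabilizers

open MulAction

variable {G V : Type*} [Group G] [TopologicalSpace G] [MulAction G V]

theorem infinite_of_isCompact_stabilizer [ContinuousMul G] [IsPretransitive G V]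
    (hG : ¬ CompactSpace G) {v : V} (hcomp : IsCompact (stabilizer G v : Set G)) : Infinite V := by
  refine not_finite_iff_infinite.1 fun _ ↦ hG ?_
  have : Nonempty V := ⟨v⟩
  have : (stabilizer G v).FiniteIndex :=
    ⟨index_stabilizer_of_transitive G v ▸ Nat.card_pos.ne'⟩
  exact compactSpace_of_isCompact_of_finiteIndex hcomp

variable [MeasurableSpace G] [BorelSpace G] {μ : Measure G} [IsFiniteMeasureOnCompacts μ]
  [μ.IsOpenPosMeasure] {Δ : G →* ℝ≥0ˣ}

theorem IsModularFunction.stabilizer_le_ker (hΔ : IsModularFunction μ Δ) {v : V}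
    (hcomp : IsCompact (stabilizer G v : Set G)) (hopen : IsOpen (stabilizer G v : Set G)) :
    stabilizer G v ≤ Δ.ker :=
  hΔ.le_ker hopen.measurableSet (hopen.measure_pos μ ⟨1, one_mem _⟩).ne' hcomp.measure_ne_top

variable [IsTopologicalGroup G] [μ.IsMulRightInvariant]

theorem IsModularFunction.mul_relIndex_stabilizer_smul
    (hΔ : IsModularFunction μ Δ) (hcomp : ∀ v : V, IsCompact (stabilizer G v : Set G))
    (hopen : ∀ v : V, IsOpen (stabilizer G v : Set G)) (g : G) (v : V) :
    (Δ g : ℝ≥0) * (stabilizer G (g • v)).relIndex (stabilizer G v) =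
      (stabilizer G v).relIndex (stabilizer G (g • v)) := by
  have := isFiniteRelIndex_of_isOpen_of_isCompact (hopen v) (hcomp (g • v))
  have := isFiniteRelIndex_of_isOpen_of_isCompact (hopen (g • v)) (hcomp v)
  have hinf : IsOpen ((stabilizer G v ⊓ stabilizer G (g • v) : Subgroup G) : Set G) :=
    (hopen v).inter (hopen (g • v))
  have hinf_ne_zero : μ (stabilizer G v ⊓ stabilizer G (g • v) : Subgroup G) ≠ 0 :=
    (hinf.measure_pos μ ⟨1, one_mem _⟩).ne'
  exact hΔ.mul_relIndex_map_conj (stabilizer_smul_eq_stabilizer_map_conj g v)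
    (hopen v).measurableSet (hopen (g • v)).measurableSet hinf_ne_zero (hcomp v).measure_ne_top

theorem add_le_ncard_neighborSet_of_modularFunction_ne_one [IsPretransitive G V]
    (hΔ : IsModularFunction μ Δ) (hΔ_ne_one : Δ ≠ 1)
    {p q : ℕ} (hpq : p.Coprime q) {x : ℝ≥0ˣ} (hx : (x : ℝ≥0) = (p : ℝ≥0) / (q : ℝ≥0))
    (hrange : Δ.range ≤ Subgroup.zpowers x) {Γ : SimpleGraph V} (hconn : Γ.Preconnected)
    (hadj : ∀ (g : G) (u v : V), Γ.Adj u v → Γ.Adj (g • u) (g • v))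
    (hcomp : ∀ v : V, IsCompact (stabilizer G v : Set G))
    (hopen : ∀ v : V, IsOpen (stabilizer G v : Set G)) {v : V}
    (hfin : (Γ.neighborSet v).Finite) : p + q ≤ (Γ.neighborSet v).ncard := by
  have hstab : stabilizer G v ≤ Δ.ker := hΔ.stabilizer_le_ker (hcomp v) (hopen v)
  obtain ⟨g, hvg, hg⟩ := exists_adj_smul_map_ne_one hconn hadj hΔ_ne_one hstab
  obtain ⟨k, hk : x ^ k = Δ g⟩ := hrange ⟨g, rfl⟩
  have hk_ne_zero : k ≠ 0 := by
    rintro rfl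
    exact hg (by rw [← hk, zpow_zero])
  have hratio := hΔ.mul_relIndex_stabilizer_smul hcomp hopen g v
  rw [← hk, Units.val_zpow_eq_zpow_val, hx] at hratio
  have hindex_ne_zero :=
    (isFiniteRelIndex_of_isOpen_of_isCompact (hopen v) (hcomp (g • v))).relIndex_ne_zero
  exact (add_le_add_of_coprime_of_div_zpow_mul_eq hpq hk_ne_zero hindex_ne_zero hratio).trans
    (relIndex_stabilizer_add_relIndex_stabilizer_le hadj hfin hstab hvg hg)

end CompactOpenStabilizers

theorem cyclic_modular_image_degree_bound_general {G V : Type*} [Group G] [TopologicalSpace G]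
    [IsTopologicalGroup G] [MeasurableSpace G] [BorelSpace G] (hnc : ¬ CompactSpace G)
    {μ : Measure G} [IsFiniteMeasureOnCompacts μ] [μ.IsOpenPosMeasure] [μ.IsMulRightInvariant]
    {Δ : G →* ℝ≥0ˣ} (hΔ : IsModularFunction μ Δ) {p q : ℕ} (hpq : p.Coprime q)
    {x : ℝ≥0ˣ} (hx : (x : ℝ≥0) = (p : ℝ≥0) / (q : ℝ≥0)) (hgen : Δ.range = Subgroup.zpowers x)
    {Γ : SimpleGraph V} {ρ : G →* Equiv.Perm V} (hCA : IsCayleyAbels Γ ρ) (v : V) :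
    p + q ≤ (Γ.neighborSet v).ncard := by
  obtain ⟨hconn, hfin, hadj, htrans, hstab⟩ := hCA
  let : MulAction G V := MulAction.compHom V ρ
  have : MulAction.IsPretransitive G V := ⟨htrans⟩
  by_cases hx_one : x = 1
  · have : Infinite V := infinite_of_isCompact_stabilizer hnc (hstab v).1
    rw [hx_one, Units.val_one] at hx
    obtain ⟨rfl, rfl⟩ := eq_one_and_eq_one_of_coprime_of_div_eq_one hpq hx.symm
    exact two_le_ncard_neighborSet hconn hadj hfin v
  · have hΔ_ne_one : Δ ≠ 1 := by
      rintro rfl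
      exact hx_one (Subgroup.zpowers_eq_bot.1 (hgen ▸ MonoidHom.range_one))
    exact add_le_ncard_neighborSet_of_modularFunction_ne_one hΔ hΔ_ne_one hpq hx hgen.le
      hconn.preconnected hadj (fun v ↦ (hstab v).1) (fun v ↦ (hstab v).2) (hfin v)

/-- Let `G` be a non-compact, compactly generated t.d.l.c. group whose modular function `Δ`
(characterized by `μ(g·A) = Δ(g)·μ(A)` for a right Haar measure `μ`) has image generated by
the single rational number `p/q` with `p, q` coprime positive integers.  Then every
Cayley–Abels graph for `G` has degree at least `p + q`. -/
theorem cyclic_modular_image_degree_bound {G V : Type*} [Group G] [TopologicalSpace G]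
    [IsTopologicalGroup G] [T2Space G] [TotallyDisconnectedSpace G] [LocallyCompactSpace G]
    [MeasurableSpace G] [BorelSpace G]
    (hnc : ¬ CompactSpace G)
    (hcg : ∃ S : Set G, IsCompact S ∧ Subgroup.closure S = ⊤)
    (μ : Measure G) [IsFiniteMeasureOnCompacts μ] [μ.IsOpenPosMeasure]
    [μ.IsMulRightInvariant]
    (Δ : G →* ℝ≥0ˣ)
    (hΔ : ∀ (g : G) (A : Set G), MeasurableSet A →
      μ ((fun x => g * x) '' A) = ((Δ g : ℝ≥0) : ℝ≥0∞) * μ A)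
    (p q : ℕ) (hp : 0 < p) (hq : 0 < q) (hpq : Nat.Coprime p q)
    (x : ℝ≥0ˣ) (hx : (x : ℝ≥0) = (p : ℝ≥0) / (q : ℝ≥0))
    (hgen : Δ.range = Subgroup.zpowers x)
    (Γ : SimpleGraph V) (ρ : G →* Equiv.Perm V) (hCA : IsCayleyAbels Γ ρ) :
    ∀ v : V, p + q ≤ (Γ.neighborSet v).ncard := by
  exact cyclic_modular_image_degree_bound_general hnc hΔ hpq hx hgen hCA
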